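/- Let a, b ∈ k with ab = 0 and (a,b) ≠ (0,0), and let R = k⟨x,y⟩/(ax² + by²) be the quotient of the free k-algebra on x, y by the two-sided ideal generated by ax² + by², with augmentation ε : R → k sending x and y to 0. Then Ext^0_R(k,R) = 0, Ext^i_R(k,R) = 0 for all i ≥ 2, and Ext^1_R(k,R) is infinite-dimensional over k; in particular R is not left Gorenstein. -/

import Mathlib

/-!
Write `x` for the generator whose square vanishes in `R` and `y` for the other one. The left module
`k` has the free resolution `⋯ → R → R → R² → R → k`, with maps
`(s, t) ↦ s x + t y`, then `r ↦ (r x, 0)`, then `r ↦ r x` forever. It is exact because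
`s x + t y = 0` forces `s ∈ R x` and `t = 0`; these syzygies are read off from a representation of
`R` by triangular endomorphisms (`IsUniv.relation`, `IsUniv.left_syzygy`).

Applying `Hom_R(-, R)` gives the complex `R → R² → R → R → ⋯` with maps `r ↦ (x r, y r)`,
`(s, t) ↦ x s`, then `s ↦ x s`. Reversal of words is an anti-automorphism of `R`, so the left-handed
syzygies give `x r = 0 ↔ r ∈ x R` and `y r = 0 ↔ r = 0`. Hence cohomology vanishes in degrees `0`
and `≥ 2`, while `t ↦ [(0, t)]` has kernel `y x R` in degree `1`. That kernel dies under the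
surjection `R → k[X]`, `x ↦ 0`, `y ↦ X`, so `Ext¹` is infinite-dimensional (`IsUniv.ext_all`).
-/

open CategoryTheory
open scoped DirectSum

noncomputable section

/-- The single relation `a x² + b y²` in the free algebra `k⟨x,y⟩`. -/
inductive DiagRel (k : Type) [Field k] (a b : k) :
    FreeAlgebra k (Fin 2) → FreeAlgebra k (Fin 2) → Prop
  | rel : DiagRel k a b
      (a • (FreeAlgebra.ι k 0 * FreeAlgebra.ι k 0) +
        b • (FreeAlgebra.ι k 1 * FreeAlgebra.ι k 1)) 0

open Polynomial MulOpposite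

/-! ### The algebra `k⟨x,y⟩/(x²)` -/

/-- `R` is the quotient of the free `k`-algebra on `x, y` by the relation `x² = 0`: it is generated
by `x` and `y`, the square of `x` is zero, and every pair `u, v` with `u² = 0` in a `k`-algebra is
the image of `x, y` under a homomorphism. -/
structure IsUniv (k : Type) [Field k] (R : Type) [Ring R] [Algebra k R] (x y : R) : Prop where
  sq_zero : x * x = 0
  adjoin_eq_top : Algebra.adjoin k {x, y} = ⊤
  exists_lift : ∀ (B : Type) [Ring B] [Algebra k B] (u v : B), u * u = 0 →
    ∃ f : R →ₐ[k] B, f x = u ∧ f y = v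

namespace IsUniv
variable {k : Type} [Field k] {R : Type} [Ring R] [Algebra k R] {x y : R}

/-- `R = k + R x + R y`, so the augmentation ideal is `R x + R y`. -/
theorem exists_eq_add (h : IsUniv k R x y) (r : R) :
    ∃ (c : k) (s t : R), r = algebraMap k R c + (s * x + t * y) := by
  have hr : r ∈ Algebra.adjoin k {x, y} := h.adjoin_eq_top ▸ Algebra.mem_top
  induction hr using Algebra.adjoin_induction with
  | mem z hz =>
    rcases hz with rfl | rfl
    · exact ⟨0, 1, 0, by simp⟩
    · exact ⟨0, 0, 1, by simp⟩
  | algebraMap c => exact ⟨c, 0, 0, by simp⟩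
  | add a b _ _ ha hb =>
    obtain ⟨c, s, t, rfl⟩ := ha
    obtain ⟨c', s', t', rfl⟩ := hb
    exact ⟨c + c', s + s', t + t', by rw [map_add]; noncomm_ring⟩
  | mul a b _ _ ha hb =>
    obtain ⟨c, s, t, rfl⟩ := ha
    obtain ⟨c', s', t', rfl⟩ := hb
    refine ⟨c * c', algebraMap k R c' * s + (algebraMap k R c + (s * x + t * y)) * s',
      algebraMap k R c' * t + (algebraMap k R c + (s * x + t * y)) * t', ?_⟩
    rw [mul_add _ (algebraMap k R c'), ← Algebra.commutes c', map_mul, Algebra.commutes c]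
    noncomm_ring

/-- Left syzygies of `x, y`: since `x u = 0`, there is an `ε`-derivation `R → N` sending `x ↦ u` and
`y ↦ v`, and it takes `s x + t y` to `s u + t v`. -/
theorem relation (h : IsUniv k R x y) {N : Type} [AddCommGroup N] [Module k N]
    [Module R N] [IsScalarTower k R N] (u v : N) (hu : x • u = 0) (s t : R)
    (hst : s * x + t * y = 0) : s • u + t • v = 0 := by
  -- `A z w` is the endomorphism `(n, c) ↦ (z n + c w, 0)` of `N × k`; the derivation is the first
  -- coordinate of the action on `(0, 1)` for the representation `x ↦ A x u`, `y ↦ A y v`.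
  let A : R → N → Module.End k (N × k) := fun z w =>
    (LinearMap.inl k N k).comp
      (((Algebra.lsmul k k N z).comp (LinearMap.fst k N k)) +
        (LinearMap.toSpanSingleton k N w).comp (LinearMap.snd k N k))
  have hA : ∀ z w n c, A z w (n, c) = (z • n + c • w, 0) := fun z w n c => by simp [A]
  obtain ⟨f, hfx, hfy⟩ := h.exists_lift (Module.End k (N × k)) (A x u) (A y v) (by
    refine LinearMap.ext fun ⟨n, c⟩ => ?_
    have : x • c • u = 0 := by
      rw [← algebraMap_smul R c u, smul_smul, ← Algebra.commutes, mul_smul, hu, smul_zero]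
    rw [Module.End.mul_apply, hA, hA, smul_add, smul_smul, h.sq_zero, this]
    simp)
  have hf : ∀ r n, f r (n, 0) = (r • n, 0) := by
    intro r
    have hr : r ∈ Algebra.adjoin k {x, y} := h.adjoin_eq_top ▸ Algebra.mem_top
    induction hr using Algebra.adjoin_induction with
    | mem z hz =>
      rcases hz with rfl | rfl
      · intro n; rw [hfx, hA]; simp
      · intro n; rw [hfy, hA]; simp
    | algebraMap c => intro n; simp [Module.algebraMap_end_apply]
    | add a b _ _ ha hb => intro n; simp [ha, hb, add_smul]
    | mul a b _ _ ha hb => intro n; simp [ha, hb, mul_smul]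
  have key := congrArg (fun g => (f g (0, 1)).1) hst
  simpa [hfx, hfy, hA, hf] using key

/-- The module of relations between `x` and `y` is generated by `(x, 0)`: apply `relation` to
`(R ⧸ R x) × R` with `u = (1, 0)` and `v = (0, 1)`. -/
theorem left_syzygy (h : IsUniv k R x y) {s t : R} (hst : s * x + t * y = 0) :
    (∃ u, s = u * x) ∧ t = 0 := by
  have key := h.relation (N := (R ⧸ Submodule.span R {x}) × R)
    (Submodule.Quotient.mk 1, 0) (0, 1) (by
      ext
      · simp only [Prod.smul_mk, ← Submodule.Quotient.mk_smul]
        simp [Submodule.Quotient.mk_eq_zero, Submodule.mem_span_singleton_self]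
      · simp) s t hst
  simp only [Prod.smul_mk, ← Submodule.Quotient.mk_smul, Prod.mk_add_mk, Prod.mk_eq_zero] at key
  refine ⟨?_, by simpa using key.2⟩
  have := key.1
  simp only [smul_zero, add_zero, smul_eq_mul, mul_one, Submodule.Quotient.mk_eq_zero,
    Submodule.mem_span_singleton] at this
  obtain ⟨u, hu⟩ := this
  exact ⟨u, hu.symm⟩

/-- Reversal of words, as a homomorphism to the opposite algebra. -/
theorem exists_rev (h : IsUniv k R x y) :
    ∃ ρ : R →ₐ[k] Rᵐᵒᵖ, ρ x = op x ∧ ρ y = op y ∧ ∀ r, unop (ρ (unop (ρ r))) = r := by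
  obtain ⟨ρ, hx, hy⟩ := h.exists_lift Rᵐᵒᵖ (op x) (op y) (by rw [← op_mul, h.sq_zero, op_zero])
  refine ⟨ρ, hx, hy, fun r => ?_⟩
  have hr : r ∈ Algebra.adjoin k {x, y} := h.adjoin_eq_top ▸ Algebra.mem_top
  induction hr using Algebra.adjoin_induction with
  | mem z hz =>
    rcases hz with rfl | rfl
    · simp [hx]
    · simp [hy]
  | algebraMap c => simp
  | add a b _ _ ha hb => simp [ha, hb]
  | mul a b _ _ ha hb => simp [ha, hb]

theorem right_ann_x (h : IsUniv k R x y) {r : R} (hr : x * r = 0) : ∃ u, r = x * u := by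
  obtain ⟨ρ, hx, hy, hρ⟩ := h.exists_rev
  have h1 : unop (ρ r) * x + 0 * y = 0 := by
    simpa [hx] using congrArg (fun z => unop (ρ z)) hr
  obtain ⟨⟨u, hu⟩, -⟩ := h.left_syzygy h1
  exact ⟨unop (ρ u), by rw [← hρ r, hu]; simp [hx]⟩

theorem right_ann_y (h : IsUniv k R x y) {r : R} (hr : y * r = 0) : r = 0 := by
  obtain ⟨ρ, hx, hy, hρ⟩ := h.exists_rev
  have h1 : 0 * x + unop (ρ r) * y = 0 := by
    simpa [hy] using congrArg (fun z => unop (ρ z)) hr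
  rw [← hρ r, (h.left_syzygy h1).2]; simp

theorem exists_toPolynomial (h : IsUniv k R x y) :
    ∃ f : R →ₐ[k] k[X], f x = 0 ∧ Function.Surjective f := by
  obtain ⟨f, hx, hy⟩ := h.exists_lift k[X] 0 X (by simp)
  exact ⟨f, hx, fun p => ⟨aeval y p, by rw [← aeval_algHom_apply, hy, aeval_X_left_apply]⟩⟩

end IsUniv
/-! ### `Ext` from a projective resolution -/

section Ext
variable {k : Type} [Field k] {R : Type} [Ring R] [Algebra k R] {X Y : ModuleCat.{0} R}

/-- The `k`-module `Extⁿ_R(X, Y)`. -/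
abbrev ExtMod (k : Type) [Field k] {R : Type} [Ring R] [Algebra k R] (X Y : ModuleCat.{0} R)
    (n : ℕ) : ModuleCat k :=
  ((Ext k (ModuleCat R) n).obj (Opposite.op X)).obj Y

theorem ext_zero (P : ProjectiveResolution X)
    (H : ∀ f : P.complex.X 0 ⟶ Y, P.complex.d 1 0 ≫ f = 0 → f = 0) :
    Subsingleton (ExtMod k X Y 0) := by
  refine ModuleCat.subsingleton_of_isZero (.of_iso ?_ (P.isoExt 0 Y))
  rw [← HomologicalComplex.exactAt_iff_isZero_homology,
    HomologicalComplex.exactAt_iff' _ 0 0 1 (by simp) (by simp),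
    ShortComplex.moduleCat_exact_iff]
  intro f hf
  refine ⟨0, ?_⟩
  rw [map_zero]
  exact (H f hf).symm

theorem ext_succ (P : ProjectiveResolution X) (n : ℕ)
    (H : ∀ f : P.complex.X (n + 1) ⟶ Y, P.complex.d (n + 2) (n + 1) ≫ f = 0 →
      ∃ g : P.complex.X n ⟶ Y, P.complex.d (n + 1) n ≫ g = f) :
    Subsingleton (ExtMod k X Y (n + 1)) := by
  refine ModuleCat.subsingleton_of_isZero (.of_iso ?_ (P.isoExt (n + 1) Y))
  rw [← HomologicalComplex.exactAt_iff_isZero_homology,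
    HomologicalComplex.exactAt_iff' _ n (n + 1) (n + 2) (by simp) (by simp),
    ShortComplex.moduleCat_exact_iff]
  exact H

/-- A linear family of `1`-cocycles gives a linear map to `Ext¹`, which vanishes only on those `v`
whose cocycle is a coboundary. -/
theorem ext_one (P : ProjectiveResolution X) {V : Type} [AddCommGroup V] [Module k V]
    (F : V →ₗ[k] (P.complex.X 1 ⟶ Y)) (hF : ∀ v, P.complex.d 2 1 ≫ F v = 0) :
    ∃ φ : V →ₗ[k] ExtMod k X Y 1, ∀ v, φ v = 0 →
      ∃ g : P.complex.X 0 ⟶ Y, P.complex.d 1 0 ≫ g = F v := by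
  let K := P.complex.linearYonedaObj k Y
  let S := K.sc' 0 1 2
  let e : ExtMod k X Y 1 ≅ S.moduleCatLeftHomologyData.H :=
    P.isoExt 1 Y ≪≫ ShortComplex.homologyMapIso (K.isoSc' 0 1 2 (by simp) (by simp)) ≪≫
      S.moduleCatHomologyIso
  refine ⟨e.toLinearEquiv.symm.toLinearMap ∘ₗ
    (LinearMap.range S.moduleCatToCycles).mkQ ∘ₗ
    (LinearMap.codRestrict (LinearMap.ker S.g.hom) F hF), fun v hv => ?_⟩
  have h1 := (LinearEquiv.map_eq_zero_iff e.toLinearEquiv.symm).1 hv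
  have h2 := (Submodule.Quotient.mk_eq_zero _).1 h1
  obtain ⟨g, hg⟩ := h2
  exact ⟨g, congrArg Subtype.val hg⟩

end Ext

/-! ### The resolution -/

section Res
variable {R : Type} [Ring R]

/-- The terms `R, R², R, R, …` of the resolution. -/
def resX (R : Type) [Ring R] : ℕ → ModuleCat.{0} R
  | 0 => ModuleCat.of R R
  | 1 => ModuleCat.of R (R × R)
  | _ + 2 => ModuleCat.of R R

/-- The differentials of the resolution: `(s, t) ↦ s x + t y`, then `r ↦ (r x, 0)`, then
`r ↦ r x`. -/
def resD (x y : R) : ∀ n, resX R (n + 1) ⟶ resX R n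
  | 0 => ModuleCat.ofHom ((LinearMap.toSpanSingleton R R x).coprod (LinearMap.toSpanSingleton R R y))
  | 1 => ModuleCat.ofHom ((LinearMap.inl R R R).comp (LinearMap.toSpanSingleton R R x))
  | _ + 2 => ModuleCat.ofHom (LinearMap.toSpanSingleton R R x)

theorem resD_comp (x y : R) (hx : x * x = 0) (n : ℕ) : resD x y (n + 1) ≫ resD x y n = 0 := by
  match n with
  | 0 =>
    refine ModuleCat.hom_ext (LinearMap.ext fun (r : R) => ?_)
    change (r * x) * x + 0 * y = 0
    rw [mul_assoc, hx]; simp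
  | 1 =>
    refine ModuleCat.hom_ext (LinearMap.ext fun (r : R) => ?_)
    change ((r * x) * x, (0 : R)) = 0
    rw [mul_assoc, hx]; simp
  | n + 2 =>
    refine ModuleCat.hom_ext (LinearMap.ext fun (r : R) => ?_)
    change (r * x) * x = 0
    rw [mul_assoc, hx]; simp

/-- The complex `⋯ → R → R → R² → R` with differentials `resD`. -/
def resC (x y : R) (hx : x * x = 0) : ChainComplex (ModuleCat.{0} R) ℕ :=
  ChainComplex.of (resX R) (resD x y) (resD_comp x y hx)

theorem resC_d (x y : R) (hx : x * x = 0) (n : ℕ) :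
    (resC x y hx).d (n + 1) n = resD x y n := by
  simp [resC]

/-- The complex `resC x y` as a projective resolution of a cyclic module `M`, presented by a
surjection `q : R → M` whose kernel is `R x + R y`. -/
def resolution {x y : R} (hx : x * x = 0)
    (hl : ∀ s t : R, s * x + t * y = 0 → (∃ u, s = u * x) ∧ t = 0)
    {M : Type} [AddCommGroup M] [Module R M] (q : R →ₗ[R] M) (hq : Function.Surjective q)
    (hqx : q x = 0) (hqy : q y = 0) (hker : ∀ r, q r = 0 → ∃ s t, r = s * x + t * y) :
    ProjectiveResolution (ModuleCat.of R M) :=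
  have hw : resD x y 0 ≫ ModuleCat.ofHom q = 0 := by
    refine ModuleCat.hom_ext (LinearMap.ext fun (p : R × R) => ?_)
    change q (p.1 • x + p.2 • y) = 0
    simp only [map_add, map_smul, hqx, hqy, smul_zero, add_zero]
  { complex := resC x y hx
    projective := by
      rintro (_ | _ | n)
      · exact inferInstanceAs (Projective (ModuleCat.of R R))
      · exact inferInstanceAs (Projective (ModuleCat.of R (R × R)))
      · exact inferInstanceAs (Projective (ModuleCat.of R R))
    π := ((resC x y hx).toSingle₀Equiv _).symm
      ⟨ModuleCat.ofHom q, by rw [resC_d x y hx 0]; exact hw⟩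
    quasiIso := ⟨fun n => by
      cases n with
      | zero =>
        rw [ChainComplex.quasiIsoAt₀_iff, ShortComplex.quasiIso_iff_of_zeros' _ rfl rfl rfl]
        have hex : (ShortComplex.mk (resD x y 0) (ModuleCat.ofHom q) hw).Exact ∧
            Epi (ModuleCat.ofHom q) := by
          refine ⟨?_, (ModuleCat.epi_iff_surjective _).2 hq⟩
          rw [ShortComplex.moduleCat_exact_iff]
          intro r hr
          obtain ⟨s, t, hst⟩ := hker r hr
          exact ⟨(s, t), hst.symm⟩
        refine (ShortComplex.exact_and_epi_g_iff_of_iso ?_).2 hex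
        refine ShortComplex.isoMk (Iso.refl _) (Iso.refl _) (Iso.refl _) ?_ ?_
        · exact ((Category.id_comp _).trans (resC_d x y hx 0).symm).trans (Category.comp_id _).symm
        · refine (Category.id_comp _).trans (Eq.trans ?_ (Category.comp_id _).symm)
          exact (ChainComplex.toSingle₀Equiv_symm_apply_f_zero (C := resC x y hx)
            (ModuleCat.ofHom q) _).symm
      | succ n =>
        rw [quasiIsoAt_iff_exactAt' (hL := ChainComplex.exactAt_succ_single_obj ..),
          HomologicalComplex.exactAt_iff' _ (n + 2) (n + 1) n (by simp) (by simp)]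
        have hex :
            (ShortComplex.mk (resD x y (n + 1)) (resD x y n) (resD_comp x y hx n)).Exact := by
          rw [ShortComplex.moduleCat_exact_iff]
          match n with
          | 0 =>
            rintro ⟨s, t⟩ h
            obtain ⟨⟨u, rfl⟩, rfl⟩ := hl s t h
            exact ⟨u, rfl⟩
          | 1 =>
            intro (s : R) h
            obtain ⟨⟨u, hu⟩, -⟩ := hl s 0 (by rw [zero_mul, add_zero]; exact congrArg Prod.fst h)
            exact ⟨u, hu.symm⟩
          | n + 2 =>
            intro (s : R) h
            obtain ⟨⟨u, hu⟩, -⟩ := hl s 0 (by rw [zero_mul, add_zero]; exact h)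
            exact ⟨u, hu.symm⟩
        refine (ShortComplex.exact_iff_of_iso ?_).2 hex
        refine ShortComplex.isoMk (Iso.refl _) (Iso.refl _) (Iso.refl _) ?_ ?_
        · exact ((Category.id_comp _).trans (resC_d x y hx (n + 1)).symm).trans
            (Category.comp_id _).symm
        · exact ((Category.id_comp _).trans (resC_d x y hx n).symm).trans
            (Category.comp_id _).symm⟩ }

end Res

/-! ### Computation of `Ext` -/

namespace IsUniv
variable {k : Type} [Field k] {R : Type} [Ring R] [Algebra k R] {x y : R}

theorem exists_eq_of_ker (h : IsUniv k R x y) (ε : R →ₐ[k] k) (hεx : ε x = 0) (hεy : ε y = 0)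
    (r : R) (hr : ε r = 0) : ∃ s t, r = s * x + t * y := by
  obtain ⟨c, s, t, rfl⟩ := h.exists_eq_add r
  have hc : c = 0 := by simpa [hεx, hεy] using hr
  exact ⟨s, t, by rw [hc, map_zero, zero_add]⟩

/-- The computation of `Ext_R(M, R)` for `M = R ⧸ (R x + R y)`. -/
theorem ext_all (h : IsUniv k R x y) {M : Type} [AddCommGroup M] [Module R M]
    (q : R →ₗ[R] M) (hq : Function.Surjective q)
    (hqx : q x = 0) (hqy : q y = 0) (hker : ∀ r, q r = 0 → ∃ s t, r = s * x + t * y) :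
    Subsingleton (ExtMod k (ModuleCat.of R M) (ModuleCat.of R R) 0) ∧
    (∀ i, 2 ≤ i → Subsingleton (ExtMod k (ModuleCat.of R M) (ModuleCat.of R R) i)) ∧
    ¬ Module.Finite k (ExtMod k (ModuleCat.of R M) (ModuleCat.of R R) 1) := by
  let P := resolution h.sq_zero (fun s t => h.left_syzygy) q hq hqx hqy hker
  have hd : ∀ n, P.complex.d (n + 1) n = resD x y n := resC_d x y h.sq_zero
  -- A map `f` with `f x = 0` is right multiplication by an element of `x R`.
  have hX : ∀ f : R →ₗ[R] R, f x = 0 → ∃ u, f 1 = x * u := fun f hf =>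
    h.right_ann_x (by rw [← smul_eq_mul, ← map_smul, smul_eq_mul, mul_one, hf])
  refine ⟨ext_zero P fun f hf => ?_, fun i hi => ?_, fun hfin => ?_⟩
  · rw [hd 0] at hf
    let f' : R →ₗ[R] R := f.hom
    have hf' : ∀ s t, f' (s * x + t * y) = 0 := fun s t =>
      congrArg (fun g => g.hom ((s, t) : R × R)) hf
    have h1 : f' 1 = 0 := by
      refine h.right_ann_y ?_
      rw [← smul_eq_mul, ← map_smul, smul_eq_mul, mul_one]
      simpa using hf' 0 1
    exact ModuleCat.hom_ext (LinearMap.ext_ring h1)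
  · obtain ⟨n, rfl⟩ : ∃ n, i = n + 1 + 1 := ⟨i - 2, by omega⟩
    cases n with
    | zero =>
      refine ext_succ P 1 fun f hf => ?_
      rw [hd 2] at hf
      rw [hd 1]
      let f' : R →ₗ[R] R := f.hom
      have hf' : f' (1 * x) = 0 := congrArg (fun g => g.hom (1 : R)) hf
      obtain ⟨u, hu⟩ := hX f' (by rwa [one_mul] at hf')
      refine ⟨ModuleCat.ofHom ((LinearMap.toSpanSingleton R R u).comp (LinearMap.fst R R R)), ?_⟩
      refine ModuleCat.hom_ext (LinearMap.ext fun (r : R) => ?_)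
      change (r * x) * u = f' r
      rw [mul_assoc, ← hu, ← smul_eq_mul, ← map_smul, smul_eq_mul, mul_one]
    | succ n =>
      refine ext_succ P (n + 2) fun f hf => ?_
      rw [hd (n + 3)] at hf
      rw [hd (n + 2)]
      let f' : R →ₗ[R] R := f.hom
      have hf' : f' (1 * x) = 0 := congrArg (fun g => g.hom (1 : R)) hf
      obtain ⟨u, hu⟩ := hX f' (by rwa [one_mul] at hf')
      refine ⟨ModuleCat.ofHom (LinearMap.toSpanSingleton R R u), ?_⟩
      refine ModuleCat.hom_ext (LinearMap.ext fun (r : R) => ?_)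
      change (r * x) * u = f' r
      rw [mul_assoc, ← hu, ← smul_eq_mul, ← map_smul, smul_eq_mul, mul_one]
  -- The class of `(0, t)`, where `t` runs over `R`, already spans an infinite-dimensional space.
  · let _ : Module k (P.complex.X 1 ⟶ ModuleCat.of R R) := Linear.homModule _ _
    -- `F t` is the cochain `R² → R`, `(s, u) ↦ u t`, that is, the pair `(0, t)`.
    let F : R →ₗ[k] (P.complex.X 1 ⟶ ModuleCat.of R R) :=
      { toFun := fun t => ModuleCat.ofHom
          ((LinearMap.toSpanSingleton R R t).comp (LinearMap.snd R R R))
        map_add' := fun t t' => by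
          refine ModuleCat.hom_ext (LinearMap.ext fun (p : R × R) => ?_)
          change p.2 * (t + t') = p.2 * t + p.2 * t'
          rw [mul_add]
        map_smul' := fun c t => by
          refine ModuleCat.hom_ext (LinearMap.ext fun (p : R × R) => ?_)
          change p.2 * (c • t) = algebraMap k R c * (p.2 * t)
          rw [← Algebra.smul_def, mul_smul_comm] }
    have hF : ∀ t, P.complex.d 2 1 ≫ F t = 0 := fun t => by
      rw [hd 1]
      refine ModuleCat.hom_ext (LinearMap.ext fun (r : R) => ?_)
      change (0 : R) * t = 0
      rw [zero_mul]
    obtain ⟨φ, hφ⟩ := ext_one (k := k) (X := ModuleCat.of R M) (Y := ModuleCat.of R R) (V := R) P F hF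
    obtain ⟨π, hπx, hπ⟩ := h.exists_toPolynomial
    have hle : LinearMap.ker φ ≤ LinearMap.ker π.toLinearMap := by
      intro t ht
      obtain ⟨g, hg⟩ := hφ t ht
      rw [hd 0] at hg
      let g' : R →ₗ[R] R := g.hom
      have hg' : ∀ s u, g' (s * x + u * y) = u * t := fun s u =>
        congrArg (fun g => g.hom ((s, u) : R × R)) hg
      obtain ⟨v, hv⟩ := hX g' (by simpa using hg' 1 0)
      have ht' : t = y * (x * v) := by
        rw [← hv, ← smul_eq_mul, ← map_smul, smul_eq_mul, mul_one]
        simpa using (hg' 0 1).symm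
      change π t = 0
      rw [ht', map_mul, map_mul, hπx, zero_mul, mul_zero]
    have : Module.Finite k (R ⧸ LinearMap.ker φ) :=
      Module.Finite.equiv φ.quotKerEquivRange.symm
    have : Module.Finite k k[X] := Module.Finite.of_surjective
      ((LinearMap.ker φ).liftQ π.toLinearMap hle) (by
        rw [← LinearMap.range_eq_top, Submodule.range_liftQ, LinearMap.range_eq_top]
        exact hπ)
    exact Polynomial.not_finite this

end IsUniv

/-! ### The quotient by `a x² + b y²` -/

theorem isUniv_ringQuot (k : Type) [Field k] (a b c : k) (hc : c ≠ 0) (i j : Fin 2)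
    (hij : ∀ l, l = i ∨ l = j)
    (hij' : i ≠ j)
    (hrel : (a • (FreeAlgebra.ι k 0 * FreeAlgebra.ι k 0) +
        b • (FreeAlgebra.ι k 1 * FreeAlgebra.ι k 1) : FreeAlgebra k (Fin 2)) =
        c • (FreeAlgebra.ι k i * FreeAlgebra.ι k i)) :
    IsUniv k (RingQuot (DiagRel k a b))
      (RingQuot.mkAlgHom k (DiagRel k a b) (FreeAlgebra.ι k i))
      (RingQuot.mkAlgHom k (DiagRel k a b) (FreeAlgebra.ι k j)) where
  sq_zero := by
    have h := RingQuot.mkAlgHom_rel k (DiagRel.rel (k := k) (a := a) (b := b))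
    rw [hrel, map_smul, map_zero, map_mul] at h
    exact (smul_eq_zero_iff_right hc).1 h
  adjoin_eq_top := by
    have h1 := FreeAlgebra.adjoin_range_ι k (Fin 2)
    have h2 := congrArg (Subalgebra.map (RingQuot.mkAlgHom k (DiagRel k a b))) h1
    rw [Algebra.map_top, AlgHom.map_adjoin, (AlgHom.range_eq_top _).2
      (RingQuot.mkAlgHom_surjective k _), ← Set.range_comp] at h2
    rw [← h2]
    congr 1
    ext z
    constructor
    · rintro (rfl | rfl) <;> exact ⟨_, rfl⟩
    · rintro ⟨l, rfl⟩
      rcases hij l with rfl | rfl <;> simp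
  exists_lift B _ _ u v hu := by
    refine ⟨RingQuot.liftAlgHom k ⟨FreeAlgebra.lift k fun l => if l = i then u else v, ?_⟩, ?_, ?_⟩
    · rintro _ _ ⟨⟩
      rw [hrel]
      simp [hu]
    · simp
    · simp [hij'.symm]

/-- When `ab = 0` and `(a, b) ≠ (0, 0)`, the relation is a nonzero multiple of `x²` or of `y²`. -/
theorem exists_isUniv (k : Type) [Field k]
    (a b : k) (hab : a * b = 0) (hne : ¬(a = 0 ∧ b = 0)) : ∃ i j : Fin 2,
    IsUniv k (RingQuot (DiagRel k a b))
      (RingQuot.mkAlgHom k (DiagRel k a b) (FreeAlgebra.ι k i))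
      (RingQuot.mkAlgHom k (DiagRel k a b) (FreeAlgebra.ι k j)) := by
  rcases mul_eq_zero.1 hab with rfl | rfl
  · exact ⟨1, 0, isUniv_ringQuot k 0 b b (by simpa using hne) 1 0 (by decide) (by decide) (by simp)⟩
  · exact ⟨0, 1, isUniv_ringQuot k a 0 a (by simpa using hne) 0 1 (by decide) (by decide) (by simp)⟩

theorem finrank_directSum_ne_one {k : Type} [Field k] (E : ℕ → ModuleCat.{0} k) (n : ℕ)
    (h : ¬ Module.Finite k (E n)) : Module.finrank k (⨁ i, (E i : Type _)) ≠ 1 := by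
  intro hfin
  have := Module.finite_of_finrank_pos (hfin ▸ Nat.one_pos)
  exact h (Module.Finite.of_surjective (DirectSum.component k ℕ (fun i => (E i : Type _)) n)
    fun z => ⟨DirectSum.lof k ℕ (fun i => (E i : Type _)) n z,
      DirectSum.component.lof_self (M := fun i => (E i : Type _)) k n z⟩)

/-- For `a, b ∈ k` with `ab = 0` and `(a,b) ≠ (0,0)`, the algebra
`R = k⟨x,y⟩/(ax² + by²)` with augmentation killing `x, y` satisfies
`Ext⁰_R(k,R) = 0`, `Extⁱ_R(k,R) = 0` for `i ≥ 2`, and `Ext¹_R(k,R)` is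
infinite-dimensional over `k`; in particular `R` is not left Gorenstein. -/
theorem stmt2 (k : Type) [Field k] [IsAlgClosed k] [CharZero k]
    (a b : k) (hab : a * b = 0) (hne : ¬(a = 0 ∧ b = 0))
    (ε : RingQuot (DiagRel k a b) →ₐ[k] k)
    (hεx : ε (RingQuot.mkAlgHom k (DiagRel k a b) (FreeAlgebra.ι k 0)) = 0)
    (hεy : ε (RingQuot.mkAlgHom k (DiagRel k a b) (FreeAlgebra.ι k 1)) = 0) :
    letI R := RingQuot (DiagRel k a b)
    letI : Module R k := Module.compHom k ε.toRingHom
    (Subsingleton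
        ((((Ext k (ModuleCat R) 0).obj (Opposite.op (ModuleCat.of R k))).obj
          (ModuleCat.of R R) : Type _))) ∧
    (∀ i : ℕ, 2 ≤ i → Subsingleton
        ((((Ext k (ModuleCat R) i).obj (Opposite.op (ModuleCat.of R k))).obj
          (ModuleCat.of R R) : Type _))) ∧
    ¬ Module.Finite k
        ((((Ext k (ModuleCat R) 1).obj (Opposite.op (ModuleCat.of R k))).obj
          (ModuleCat.of R R) : Type _)) ∧
    Module.finrank k
        (⨁ i : ℕ, (((Ext k (ModuleCat R) i).obj (Opposite.op (ModuleCat.of R k))).obj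
          (ModuleCat.of R R) : Type _)) ≠ 1 := by
  let _ : Module (RingQuot (DiagRel k a b)) k := Module.compHom k ε.toRingHom
  obtain ⟨i, j, h⟩ := exists_isUniv k a b hab hne
  have hε : ∀ l, ε (RingQuot.mkAlgHom k (DiagRel k a b) (FreeAlgebra.ι k l)) = 0 := by
    intro l
    fin_cases l <;> assumption
  let q : RingQuot (DiagRel k a b) →ₗ[RingQuot (DiagRel k a b)] k :=
    { toFun := ε
      map_add' := map_add ε
      map_smul' := fun r s => map_mul ε r s }
  have hq : Function.Surjective q := fun c => ⟨algebraMap k _ c, ε.commutes c⟩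
  obtain ⟨h0, h2, h1⟩ := h.ext_all q hq (hε i) (hε j) (h.exists_eq_of_ker ε (hε i) (hε j))
  exact ⟨h0, h2, h1, finrank_directSum_ne_one (fun i =>
    ExtMod k (ModuleCat.of (RingQuot (DiagRel k a b)) k)
      (ModuleCat.of (RingQuot (DiagRel k a b)) (RingQuot (DiagRel k a b))) i) 1 h1⟩
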